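/- Exactly q² of the orbits of the action of μ_{q+1} on K × K (acting by λ·(e₁,e₂) = (λe₁, λe₂)) are mapped to themselves by the coordinatewise Frobenius (e₁,e₂) ↦ (e₁^q, e₂^q). -/

import Mathlib

/-!
Burnside's lemma has a twisted form: if `f` maps orbits of a finite group `G` onto orbits, then the
number of orbits stable under `f`, times `|G|`, is the number of pairs `(g, x)` with `f x = g • x`.
When `f (a • x) = a ^ q • f x` and every `g ∈ G` has the form `a ^ (q - 1)` (Hilbert 90), scaling
by `a` carries the fixed points of `f` onto `{x | f x = g • x}`. So every `g` contributes
equally, and the stable orbits are equinumerous with the fixed points of `f`. For the Frobenius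
of `K × K` the latter form `F_q × F_q`.
-/

open Function
open MulAction hiding fixedPoints mem_fixedPoints

section TwistedBurnside

variable {G X : Type*} [Group G] [MulAction G X]

/-- The transporter `{g | g • x = y}` between two points of the orbit of `z` is a translate
`k * stabilizer G z * h⁻¹`, where `h` and `k` are chosen to move `z` to `x` and to `y`. -/
noncomputable def transporterEquivStabilizer {x y z : X} (hx : x ∈ orbit G z)
    (hy : y ∈ orbit G z) : {g : G // y = g • x} ≃ stabilizer G z :=
  ((Equiv.mulRight hx.choose).trans (Equiv.mulLeft hy.choose⁻¹)).subtypeEquiv fun g => by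
    have hx' : hx.choose • z = x := hx.choose_spec
    have hy' : hy.choose • z = y := hy.choose_spec
    rw [eq_comm]
    simp only [Equiv.trans_apply, Equiv.coe_mulRight, Equiv.coe_mulLeft, mem_stabilizer_iff,
      mul_smul, inv_smul_eq_iff, hx', hy']

variable (G) in
/-- The orbits of `G` on `X`, as sets, that `f` maps onto themselves. -/
def stableOrbits (f : X → X) : Set (Set X) :=
  {O | (∃ x, O = orbit G x) ∧ f '' O = O}

/-- The points at which `f` acts like `g`; for `f = id` this is `MulAction.fixedBy X g`, up to the
orientation of the equation. -/
def twistedFixedBy (f : X → X) (g : G) : Set X :=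
  {x | f x = g • x}

variable {f : X → X}

theorem apply_mem_of_mem_stableOrbits {O : Set X} (hO : O ∈ stableOrbits G f) {x : X}
    (hx : x ∈ O) : f x ∈ O :=
  hO.2 ▸ Set.mem_image_of_mem f hx

theorem eq_orbit_of_mem_stableOrbits {O : Set X} (hO : O ∈ stableOrbits G f) {x : X}
    (hx : x ∈ O) : O = orbit G x := by
  obtain ⟨⟨z, rfl⟩, -⟩ := hO
  exact (orbit_eq_iff.2 hx).symm

theorem orbit_mem_stableOrbits (hf : ∀ x, f '' orbit G x = orbit G (f x)) {g : G} {x : X}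
    (hx : x ∈ twistedFixedBy f g) : orbit G x ∈ stableOrbits G f :=
  ⟨⟨x, rfl⟩, by rw [hf, show f x = g • x from hx, orbit_smul]⟩

/-- By the orbit-stabilizer theorem, each stable orbit contributes `|G|` pairs `(x, g)` with
`f x = g • x`. -/
noncomputable def stableOrbitSigmaEquiv {O : Set X} (hO : O ∈ stableOrbits G f) :
    (Σ x : O, {g : G // f x = g • (x : X)}) ≃ G :=
  let z := hO.1.choose
  have hz : O = orbit G z := hO.1.choose_spec
  calc
    (Σ x : O, {g : G // f x = g • (x : X)}) ≃ O × stabilizer G z :=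
      Equiv.sigmaEquivProdOfEquiv fun x =>
        transporterEquivStabilizer (hz ▸ x.2) (hz ▸ apply_mem_of_mem_stableOrbits hO x.2)
    _ ≃ orbit G z × stabilizer G z := (Equiv.setCongr hz).prodCongr (Equiv.refl _)
    _ ≃ G := orbitProdStabilizerEquivGroup G z

/-- Burnside's lemma twisted by `f`: the case `f = id` is
`MulAction.sigmaFixedByEquivOrbitsProdGroup`. -/
noncomputable def sigmaTwistedFixedByEquiv (hf : ∀ x, f '' orbit G x = orbit G (f x)) :
    (Σ g : G, twistedFixedBy f g) ≃ stableOrbits G f × G :=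
  calc
    (Σ g : G, twistedFixedBy f g) ≃
        Σ O : stableOrbits G f, Σ x : (O : Set X), {g : G // f x = g • (x : X)} :=
      { toFun p := ⟨⟨_, orbit_mem_stableOrbits hf p.2.2⟩, ⟨p.2, mem_orbit_self _⟩, p.1, p.2.2⟩
        invFun p := ⟨p.2.2, p.2.1, p.2.2.2⟩
        left_inv _ := rfl
        right_inv := by
          rintro ⟨⟨O, hO⟩, ⟨x, hx⟩, g, hg⟩
          obtain rfl := eq_orbit_of_mem_stableOrbits hO hx
          rfl }
    _ ≃ stableOrbits G f × G := Equiv.sigmaEquivProdOfEquiv fun O => stableOrbitSigmaEquiv O.2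

end TwistedBurnside

section Semilinear

variable {A X : Type*} [Group A] [MulAction A X] {G : Subgroup A} {σ : A → A} {f : X → X}

theorem image_orbit_eq_orbit_apply (hf : ∀ a x, f (a • x) = σ a • f x) (hσ : σ '' G = G) (x : X) :
    f '' orbit G x = orbit G (f x) := by
  have orbit_eq (y : X) : orbit G y = (· • y) '' (G : Set A) := by
    ext
    simp [mem_orbit_iff, Subgroup.smul_def]
  calc
    f '' orbit G x = (fun a => σ a • f x) '' (G : Set A) := by
      simp only [orbit_eq, Set.image_image, hf]
    _ = (· • f x) '' (σ '' G) := (Set.image_image (· • f x) σ G).symm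
    _ = orbit G (f x) := by rw [hσ, orbit_eq]

/-- If `σ a = g * a`, then the action of `a` carries the fixed points of `f` onto the points at
which `f` acts like `g`. -/
def fixedPointsEquivTwistedFixedBy (hf : ∀ a x, f (a • x) = σ a • f x) {a : A} {g : G}
    (ha : σ a = g * a) : fixedPoints f ≃ twistedFixedBy f g :=
  (MulAction.toPerm a).subtypeEquiv fun x => by
    simp [twistedFixedBy, mem_fixedPoints, IsFixedPt, hf, ha, mul_smul, Subgroup.smul_def]

theorem card_stableOrbits_eq_card_fixedPoints [Finite G] (hf : ∀ a x, f (a • x) = σ a • f x)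
    (hσ : σ '' G = G) (hG : ∀ g ∈ G, ∃ a, σ a = g * a) :
    Nat.card (stableOrbits G f) = Nat.card (fixedPoints f) := by
  choose a ha using fun g : G => hG g g.2
  have e : stableOrbits G f × G ≃ fixedPoints f × G :=
    calc
      stableOrbits G f × G ≃ Σ g : G, twistedFixedBy f g :=
        (sigmaTwistedFixedByEquiv (image_orbit_eq_orbit_apply hf hσ)).symm
      _ ≃ Σ _ : G, fixedPoints f :=
        Equiv.sigmaCongrRight fun g => (fixedPointsEquivTwistedFixedBy hf (ha g)).symm
      _ ≃ fixedPoints f × G := (Equiv.sigmaEquivProd _ _).trans (Equiv.prodComm _ _)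
  have hcard := Nat.card_congr e
  rw [Nat.card_prod, Nat.card_prod] at hcard
  exact Nat.eq_of_mul_eq_mul_right Nat.card_pos hcard

end Semilinear

section RootsOfUnity

/-- Hilbert 90 for a finite cyclic group. -/
theorem range_powMonoidHom_eq_ker {A : Type*} [CommGroup A] [IsCyclic A] [Finite A] {d e : ℕ}
    (h : Nat.card A = d * e) : (powMonoidHom d : A →* A).range = (powMonoidHom e).ker := by
  have hd : 0 < d := Nat.pos_of_mul_pos_right (h ▸ Nat.card_pos)
  refine Subgroup.eq_of_le_of_card_ge ?_ ?_
  · rintro _ ⟨a, rfl⟩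
    simp [MonoidHom.mem_ker, ← pow_mul, ← h]
  · rw [IsCyclic.card_powMonoidHom_range, IsCyclic.card_powMonoidHom_ker, h,
      Nat.gcd_mul_left_left, Nat.gcd_mul_right_left, Nat.mul_div_cancel_left e hd]

variable {M : Type*} [CommMonoid M] {n : ℕ}

theorem image_pow_rootsOfUnity {q : ℕ} (h : q.Coprime n) :
    (· ^ q) '' (rootsOfUnity n M : Set Mˣ) = rootsOfUnity n M := by
  refine Set.Subset.antisymm (Set.image_subset_iff.2 fun l hl => pow_mem hl q) fun l hl => ?_
  obtain ⟨k, hk⟩ := exists_pow_eq_self_of_coprime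
    (h.coprime_dvd_right (orderOf_dvd_of_pow_eq_one hl))
  exact ⟨l ^ k, pow_mem hl k, (pow_right_comm l k q).trans hk⟩

theorem orbit_rootsOfUnity [NeZero n] {V : Type*} [MulAction M V] (v : V) :
    orbit (rootsOfUnity n M) v = {w | ∃ l : M, l ^ n = 1 ∧ w = l • v} := by
  ext w
  constructor
  · rintro ⟨l, rfl⟩
    exact ⟨(l : Mˣ), (mem_rootsOfUnity' n _).1 l.2, rfl⟩
  · rintro ⟨l, hl, rfl⟩
    exact ⟨rootsOfUnity.mkOfPowEq l hl, rfl⟩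

end RootsOfUnity

theorem card_fixedPoints_prodMap {α β : Type*} (f : α → α) (g : β → β) :
    Nat.card (fixedPoints (Prod.map f g)) =
      Nat.card (fixedPoints f) * Nat.card (fixedPoints g) := by
  rw [← Nat.card_prod]
  exact Nat.card_congr ((Equiv.subtypeEquivRight fun _ => isFixedPt_prodMap _).trans
    Equiv.subtypeProdEquivProd)

section FiniteField

variable {K : Type*} [Field K] {q : ℕ}

theorem card_units_of_card_eq_sq (hK : Nat.card K = q ^ 2) :
    Nat.card Kˣ = (q - 1) * (q + 1) := by
  rw [Nat.card_units, hK, mul_comm, ← Nat.sq_sub_sq, one_pow]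

variable [Finite K]

theorem card_fixedPoints_pow (hq : q - 1 ∣ Nat.card Kˣ) :
    Nat.card (fixedPoints fun x : K => x ^ q) = q := by
  have hpos : 0 < q - 1 := Nat.pos_of_dvd_of_pos hq Nat.card_pos
  obtain ⟨r, rfl⟩ : ∃ r, q = r + 1 := Nat.exists_eq_add_of_le' (by lia)
  have hfix : fixedPoints (fun x : K => x ^ (r + 1)) =
      insert 0 (Units.val '' ((powMonoidHom r : Kˣ →* Kˣ).ker : Set Kˣ)) := by
    ext x
    obtain rfl | hx := eq_or_ne x 0
    · simp [IsFixedPt]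
    · lift x to Kˣ using hx.isUnit
      simp [IsFixedPt, pow_succ, ← Units.val_pow_eq_pow_val, MonoidHom.mem_ker,
        Units.val_inj]
  rw [hfix, Nat.card_coe_set_eq, Set.ncard_insert_of_notMem (by simp),
    Set.ncard_image_of_injective _ Units.val_injective, ← Nat.card_coe_set_eq]
  congr 1
  exact (IsCyclic.card_powMonoidHom_ker Kˣ r).trans (Nat.gcd_eq_right hq)

theorem card_fixedPoints_pow_prod (hq : q - 1 ∣ Nat.card Kˣ) :
    Nat.card (fixedPoints fun p : K × K => (p.1 ^ q, p.2 ^ q)) = q ^ 2 :=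
  calc
    _ = Nat.card (fixedPoints fun x : K => x ^ q) * Nat.card (fixedPoints fun x : K => x ^ q) :=
      card_fixedPoints_prodMap _ _
    _ = q ^ 2 := by rw [card_fixedPoints_pow hq, sq]

theorem card_selfConjugate_orbits_general {n : ℕ} (hK : Nat.card Kˣ = (q - 1) * n)
    (hqn : q.Coprime n) {V : Type*} [MulAction K V] {f : V → V}
    (hf : ∀ (a : K) (v : V), f (a • v) = a ^ q • f v) :
    Nat.card {O : Set V //
      (∃ v : V, O = {w | ∃ l : K, l ^ n = 1 ∧ w = l • v}) ∧ f '' O = O} =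
      Nat.card (fixedPoints f) := by
  have hpos : 0 < (q - 1) * n := hK ▸ Nat.card_pos
  have : NeZero n := ⟨(Nat.pos_of_mul_pos_left hpos).ne'⟩
  have hq : q ≠ 0 := by
    rintro rfl
    simp at hpos
  simp only [← orbit_rootsOfUnity]
  refine card_stableOrbits_eq_card_fixedPoints (A := Kˣ) (fun a v => hf a v)
    (image_pow_rootsOfUnity hqn) fun g hg => ?_
  obtain ⟨a, rfl⟩ : g ∈ (powMonoidHom (q - 1)).range := range_powMonoidHom_eq_ker hK ▸ hg
  exact ⟨a, (pow_sub_one_mul hq a).symm⟩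

end FiniteField

/-- For `K` a field with `q²` elements (`q` an odd prime power), exactly `q²` of the orbits
of the action of the norm-one subgroup `μ_{q+1} = {λ ∈ K | λ^(q+1) = 1}` on `K × K`
(acting by `λ · (e₁, e₂) = (λe₁, λe₂)`) are mapped to themselves by the coordinatewise
Frobenius `(e₁, e₂) ↦ (e₁^q, e₂^q)`. -/
theorem card_selfConjugate_orbits (q : ℕ)
    (hq : ∃ p n : ℕ, p.Prime ∧ Odd p ∧ 0 < n ∧ q = p ^ n)
    (K : Type) [Field K] [Fintype K] (hK : Fintype.card K = q ^ 2) :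
    Nat.card {O : Set (K × K) //
      (∃ v : K × K, O = {w | ∃ l : K, l ^ (q + 1) = 1 ∧ w = (l * v.1, l * v.2)}) ∧
      (fun p : K × K => (p.1 ^ q, p.2 ^ q)) '' O = O} = q ^ 2 := by
  have hunits := card_units_of_card_eq_sq (Nat.card_eq_fintype_card.trans hK)
  exact (card_selfConjugate_orbits_general hunits (by simp) fun a v =>
    Prod.ext (mul_pow a v.1 q) (mul_pow a v.2 q)).trans (card_fixedPoints_pow_prod ⟨_, hunits⟩)
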